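/- arXiv:math/0309346 — 12 statements merged into one kernel-verified Lean document; each statement's English description precedes it below -/
import Mathlib

section
/- For every field K, the set K̃ is a subfield of K: it contains 0 and 1, and is closed under negation, addition, multiplication, and inverses of nonzero elements. -/
/-!
If a finite set `A` is adequate for `r`, then every map respecting the operations of a larger
set `B ⊇ A` still fixes `r`, since its restriction to `A` respects the operations of `A`. To reach
a new element `t` obtained from `r` and `s` by a field operation, take the union of adequate sets
for `r` and `s` and adjoin `t`, together with `0` or `1` when the operation is negation or
inversion. A map respecting the operations of this union fixes `r` and `s`, and the equation that
defines `t` then determines its value at `t`.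
-/

/-- A finite set `A ⊆ K` with `r ∈ A` is *adequate* for `r` if every map `f : A → K`
(here represented by its values, as a map `f : K → K` restricted in the hypotheses to `A`)
satisfying (1) `f 1 = 1` whenever `1 ∈ A`, (2) `f (a+b) = f a + f b` whenever `a, b, a+b ∈ A`,
(3) `f (a*b) = f a * f b` whenever `a, b, a*b ∈ A`, also satisfies `f r = r`. -/
def IsAdequate {K : Type*} [Field K] (r : K) (A : Finset K) : Prop :=
  r ∈ A ∧
  ∀ f : K → K,
    ((1 : K) ∈ A → f 1 = 1) →
    (∀ a ∈ A, ∀ b ∈ A, a + b ∈ A → f (a + b) = f a + f b) →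
    (∀ a ∈ A, ∀ b ∈ A, a * b ∈ A → f (a * b) = f a * f b) →
    f r = r

/-- `K̃` is the set of `r ∈ K` admitting a finite adequate set. -/
def KTilde (K : Type*) [Field K] : Set K :=
  {r : K | ∃ A : Finset K, IsAdequate r A}

/-- `f` respects the unit, sums and products that are visible inside `A`. -/
def RespectsOn {K : Type*} [Field K] (f : K → K) (A : Finset K) : Prop :=
  ((1 : K) ∈ A → f 1 = 1) ∧
  (∀ a ∈ A, ∀ b ∈ A, a + b ∈ A → f (a + b) = f a + f b) ∧
  (∀ a ∈ A, ∀ b ∈ A, a * b ∈ A → f (a * b) = f a * f b)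

/-- Adequacy passes to supersets, as far as fixing `r` is concerned. -/
theorem IsAdequate.fixes {K : Type*} [Field K] {r : K} {A B : Finset K} (hA : IsAdequate r A)
    (hAB : A ⊆ B) {f : K → K} (hf : RespectsOn f B) : f r = r :=
  hA.2 f (fun h => hf.1 (hAB h))
    (fun a ha b hb h => hf.2.1 a (hAB ha) b (hAB hb) (hAB h))
    (fun a ha b hb h => hf.2.2 a (hAB ha) b (hAB hb) (hAB h))

theorem mem_KTilde_of_respectsOn {K : Type*} [Field K] {r : K} (A : Finset K) (hr : r ∈ A)
    (h : ∀ f : K → K, RespectsOn f A → f r = r) : r ∈ KTilde K :=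
  ⟨A, hr, fun f h1 h2 h3 => h f ⟨h1, h2, h3⟩⟩

theorem RespectsOn.map_zero {K : Type*} [Field K] {f : K → K} {A : Finset K}
    (hf : RespectsOn f A) (h0 : (0 : K) ∈ A) : f 0 = 0 := by
  have h := hf.2.1 0 h0 0 h0 (by simpa using h0)
  rw [add_zero] at h
  exact left_eq_add.mp h

/-- `K̃` is a subfield of `K`: it contains `0` and `1`, and is closed under negation,
addition, multiplication, and inverses of nonzero elements. -/
theorem stmt_1 (K : Type*) [Field K] :
    (0 : K) ∈ KTilde K ∧
    (1 : K) ∈ KTilde K ∧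
    (∀ r ∈ KTilde K, -r ∈ KTilde K) ∧
    (∀ r ∈ KTilde K, ∀ s ∈ KTilde K, r + s ∈ KTilde K) ∧
    (∀ r ∈ KTilde K, ∀ s ∈ KTilde K, r * s ∈ KTilde K) ∧
    (∀ r ∈ KTilde K, r ≠ 0 → r⁻¹ ∈ KTilde K) := by
  classical
  refine ⟨?_, ?_, ?_, ?_, ?_, ?_⟩
  · exact mem_KTilde_of_respectsOn {0} (by simp) fun f hf => hf.map_zero (by simp)
  · exact mem_KTilde_of_respectsOn {1} (by simp) fun f hf => hf.1 (by simp)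
  · rintro r ⟨A, hA⟩
    refine mem_KTilde_of_respectsOn (A ∪ {0, -r}) (by simp) fun f hf => ?_
    have hr := hA.fixes Finset.subset_union_left hf
    have h0 := hf.map_zero (by simp)
    have h := hf.2.1 r (by simp [hA.1]) (-r) (by simp) (by simp)
    rw [add_neg_cancel, h0, hr] at h
    exact (neg_eq_of_add_eq_zero_right h.symm).symm
  · rintro r ⟨A, hA⟩ s ⟨B, hB⟩
    refine mem_KTilde_of_respectsOn (A ∪ B ∪ {r + s}) (by simp) fun f hf => ?_
    rw [hf.2.1 r (by simp [hA.1]) s (by simp [hB.1]) (by simp),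
      hA.fixes (by grind) hf, hB.fixes (by grind) hf]
  · rintro r ⟨A, hA⟩ s ⟨B, hB⟩
    refine mem_KTilde_of_respectsOn (A ∪ B ∪ {r * s}) (by simp) fun f hf => ?_
    rw [hf.2.2 r (by simp [hA.1]) s (by simp [hB.1]) (by simp),
      hA.fixes (by grind) hf, hB.fixes (by grind) hf]
  · rintro r ⟨A, hA⟩ hr0
    refine mem_KTilde_of_respectsOn (A ∪ {1, r⁻¹}) (by simp) fun f hf => ?_
    have hr := hA.fixes Finset.subset_union_left hf
    have h := hf.2.2 r (by simp [hA.1]) r⁻¹ (by simp) (by simp [hr0])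
    rw [mul_inv_cancel₀ hr0, hf.1 (by simp), hr] at h
    exact eq_inv_of_mul_eq_one_right h.symm
end

section
/- If K is a field of characteristic p > 0, then K̃ equals the prime subfield of K (the smallest subfield of K). -/
/-- If `K` has characteristic `p > 0`, then `K̃` is the prime subfield of `K`. -/
theorem stmt_4 (K : Type*) [Field K] (p : ℕ) [CharP K p] (hp : 0 < p) :
    KTilde K = ((⊥ : Subfield K) : Set K) := by
  have : Fact p.Prime :=
    ⟨(CharP.char_is_prime_or_zero K p).resolve_right hp.ne'⟩
  ext r
  constructor
  · rintro ⟨A, -, hA⟩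
    rw [SetLike.mem_coe, Subfield.mem_bot_iff_pow_eq_self K p]
    -- The Frobenius endomorphism is an admissible map for every `A`.
    exact hA (frobenius K p) (fun _ => map_one _) (fun a _ b _ _ => map_add _ a b)
      (fun a _ b _ _ => map_mul _ a b)
  · intro hr
    rw [SetLike.mem_coe, ← ZMod.fieldRange_castHom_eq_bot p] at hr
    obtain ⟨z, rfl⟩ := hr
    obtain ⟨m, rfl⟩ := ZMod.natCast_zmod_surjective z
    rw [map_natCast]
    classical
    -- The bound `m + 2` ensures that `1` lies in the set even when `m = 0`.
    have hmem : ∀ k < m + 2,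
        (k : K) ∈ (Finset.range (m + 2)).image (Nat.cast : ℕ → K) :=
      fun k hk => Finset.mem_image_of_mem _ (Finset.mem_range.2 hk)
    refine ⟨(Finset.range (m + 2)).image (Nat.cast : ℕ → K), hmem m (by omega), ?_⟩
    intro f h1 hadd _
    have m0 := hmem 0 (by omega)
    have m1 := hmem 1 (by omega)
    rw [Nat.cast_zero] at m0
    rw [Nat.cast_one] at m1
    have key : ∀ k < m + 2, f k = k := by
      intro k
      induction k with
      | zero =>
        intro _
        have h := hadd 0 m0 0 m0 (by simpa only [add_zero] using m0)
        rw [add_zero] at h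
        simpa using h
      | succ k ih =>
        intro hk
        have h := hadd k (hmem k (by omega)) 1 m1 (by exact_mod_cast hmem (k + 1) hk)
        rw [h1 m1, ih (by omega)] at h
        exact_mod_cast h
    exact key m (by omega)
end

section
/- For the field ℂ of complex numbers, ℂ̃ equals ℚ, i.e. the set of complex numbers r admitting a finite adequate set is exactly the set of rational complex numbers (the range of the canonical map ℚ → ℂ). -/
section Tilde

variable {K : Type*} [Field K]

/-- `f` satisfies conditions (1)-(3) on `A`: it respects `1` and all sums and products that stay
inside `A`. -/
def IsPartialHom (A : Finset K) (f : K → K) : Prop :=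
  ((1 : K) ∈ A → f 1 = 1) ∧
  (∀ a ∈ A, ∀ b ∈ A, a + b ∈ A → f (a + b) = f a + f b) ∧
  (∀ a ∈ A, ∀ b ∈ A, a * b ∈ A → f (a * b) = f a * f b)

lemma IsPartialHom.mono {A B : Finset K} {f : K → K} (h : IsPartialHom B f) (hAB : A ⊆ B) :
    IsPartialHom A f :=
  ⟨fun h1 => h.1 (hAB h1), fun a ha b hb hab => h.2.1 a (hAB ha) b (hAB hb) (hAB hab),
    fun a ha b hb hab => h.2.2 a (hAB ha) b (hAB hb) (hAB hab)⟩

lemma mem_KTilde_iff {r : K} :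
    r ∈ KTilde K ↔ ∃ A : Finset K, r ∈ A ∧ ∀ f, IsPartialHom A f → f r = r := by
  constructor
  · rintro ⟨A, hr, h⟩
    exact ⟨A, hr, fun f hf => h f hf.1 hf.2.1 hf.2.2⟩
  · rintro ⟨A, hr, h⟩
    exact ⟨A, hr, fun f h1 h2 h3 => h f ⟨h1, h2, h3⟩⟩

variable (K) in
/-- `KTilde K` as a subfield of `K`. -/
def tildeSubfield : Subfield K where
  carrier := KTilde K
  zero_mem' := by
    rw [mem_KTilde_iff]
    refine ⟨{0}, by simp, fun f hf => ?_⟩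
    have := hf.2.1 0 (by simp) 0 (by simp) (by simp)
    simpa using this
  one_mem' := by
    rw [mem_KTilde_iff]
    exact ⟨{1}, by simp, fun f hf => hf.1 (by simp)⟩
  add_mem' := by
    classical
    intro r s hr hs
    rw [mem_KTilde_iff] at *
    obtain ⟨A, hrA, hA⟩ := hr
    obtain ⟨B, hsB, hB⟩ := hs
    refine ⟨insert (r + s) (A ∪ B), by simp, fun f hf => ?_⟩
    rw [hf.2.1 r (by simp [hrA]) s (by simp [hsB]) (by simp), hA f (hf.mono (by grind)),
      hB f (hf.mono (by grind))]
  mul_mem' := by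
    classical
    intro r s hr hs
    rw [mem_KTilde_iff] at *
    obtain ⟨A, hrA, hA⟩ := hr
    obtain ⟨B, hsB, hB⟩ := hs
    refine ⟨insert (r * s) (A ∪ B), by simp, fun f hf => ?_⟩
    rw [hf.2.2 r (by simp [hrA]) s (by simp [hsB]) (by simp), hA f (hf.mono (by grind)),
      hB f (hf.mono (by grind))]
  neg_mem' := by
    classical
    intro r hr
    rw [mem_KTilde_iff] at *
    obtain ⟨A, hrA, hA⟩ := hr
    refine ⟨insert (-r) (insert 0 A), by simp, fun f hf => ?_⟩
    have h0 : f 0 = 0 := by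
      simpa using hf.2.1 0 (by simp) 0 (by simp) (by simp)
    have h := hf.2.1 (-r) (by simp) r (by simp [hrA]) (by simp)
    rw [neg_add_cancel, h0, hA f (hf.mono (by grind))] at h
    exact eq_neg_of_add_eq_zero_left h.symm
  inv_mem' := by
    classical
    intro r hr
    by_cases hr0 : r = 0
    · simpa [hr0] using hr
    rw [mem_KTilde_iff] at *
    obtain ⟨A, hrA, hA⟩ := hr
    refine ⟨insert r⁻¹ (insert 1 A), by simp, fun f hf => ?_⟩
    have h := hf.2.2 r⁻¹ (by simp) r (by simp [hrA]) (by simp [hr0])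
    rw [inv_mul_cancel₀ hr0, hf.1 (by simp), hA f (hf.mono (by grind))] at h
    exact eq_inv_of_mul_eq_one_left h.symm

lemma ringHom_apply_of_mem_KTilde {r : K} (hr : r ∈ KTilde K) (σ : K →+* K) : σ r = r := by
  obtain ⟨A, -, h⟩ := hr
  exact h σ (fun _ => map_one σ) (fun a _ b _ _ => map_add σ a b) (fun a _ b _ _ => map_mul σ a b)

end Tilde

section Transcendental

open Polynomial IntermediateField

variable {F E : Type*} [Field F] [Field E] [Algebra F E]

/-- If `r = p(r²) / q(r²)`, then `X * q(X²) = p(X²)`, where the left side has odd degree and the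
right side even degree. -/
lemma notMem_adjoin_sq {r : E} (hr : Transcendental F r) : r ∉ F⟮r ^ 2⟯ := by
  intro h
  obtain ⟨p, q, hpq⟩ := (mem_adjoin_simple_iff F _).1 h
  have hr0 : r ≠ 0 := by
    rintro rfl
    exact hr isAlgebraic_zero
  have hq : aeval (r ^ 2) q ≠ 0 := by
    intro h0
    rw [h0, div_zero] at hpq
    exact hr0 hpq
  have hq0 : q ≠ 0 := by
    rintro rfl
    simp at hq
  have key : X * expand F 2 q = expand F 2 p := by
    rw [← sub_eq_zero]
    refine (transcendental_iff.1 hr) _ ?_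
    rw [map_sub, map_mul, aeval_X, expand_aeval, expand_aeval, sub_eq_zero]
    exact (eq_div_iff hq).1 hpq
  have hdeg := congrArg natDegree key
  rw [natDegree_X_mul (by simpa [expand_eq_zero] using hq0), natDegree_expand,
    natDegree_expand] at hdeg
  omega

/-- A field is relatively algebraically closed in its simple transcendental extensions:
`r = p(t) / q(t)` makes `t` a root of the polynomial `p - r q` over `F(r)`, which is nonzero
when `r ∉ F`. -/
lemma transcendental_of_mem_adjoin {r t : E} (ht : Transcendental F t) (h : r ∈ F⟮t⟯)
    (hr : r ∉ Set.range (algebraMap F E)) : Transcendental F r := by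
  intro halg
  obtain ⟨p, q, hpq⟩ := (mem_adjoin_simple_iff F _).1 h
  have hq : aeval t q ≠ 0 := by
    intro h0
    rw [h0, div_zero] at hpq
    exact hr ⟨0, by simp [hpq]⟩
  have hq0 : q ≠ 0 := by
    rintro rfl
    simp at hq
  have : Algebra.IsAlgebraic F F⟮r⟯ := isAlgebraic_adjoin_simple halg.isIntegral
  refine ht (IsAlgebraic.restrictScalars F (S := F⟮r⟯)
    ⟨p.map (algebraMap F F⟮r⟯) - C (AdjoinSimple.gen F r) * q.map (algebraMap F F⟮r⟯), ?_, ?_⟩)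
  · intro h0
    have hc := congrArg (fun P => algebraMap F⟮r⟯ E (P.coeff q.natDegree)) h0
    simp only [coeff_sub, coeff_map, coeff_C_mul, map_sub, map_mul, coeff_zero, map_zero,
      AdjoinSimple.algebraMap_gen, ← IsScalarTower.algebraMap_apply, coeff_natDegree] at hc
    have hl : algebraMap F E q.leadingCoeff ≠ 0 := by simpa using hq0
    refine hr ⟨p.coeff q.natDegree / q.leadingCoeff, ?_⟩
    rw [map_div₀, div_eq_iff hl]
    exact sub_eq_zero.1 hc
  · rw [map_sub, map_mul, aeval_C, aeval_map_algebraMap, aeval_map_algebraMap,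
      AdjoinSimple.algebraMap_gen, sub_eq_zero]
    exact ((eq_div_iff hq).1 hpq).symm

end Transcendental

lemma exists_maximal_subfield_notMem {E : Type*} [Field E] {r : E} (hr : r ∉ (⊥ : Subfield E)) :
    ∃ F : Subfield E, Maximal (fun L : Subfield E => r ∉ L) F := by
  obtain ⟨F, -, hF⟩ := zorn_le_nonempty₀ {L : Subfield E | r ∉ L} (fun c hc hchain L hL => by
    refine ⟨sSup c, ?_, fun z hz => le_sSup hz⟩
    intro hmem
    obtain ⟨M, hM, hrM⟩ :=
      (Subfield.mem_sSup_of_directedOn ⟨L, hL⟩ hchain.directedOn).1 hmem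
    exact hc hM hrM) ⊥ hr
  exact ⟨F, hF⟩

open IntermediateField in
lemma isAlgebraic_of_maximal_notMem {E : Type*} [Field E] {r : E} {F : Subfield E}
    (hF : Maximal (fun L : Subfield E => r ∉ L) F) : Algebra.IsAlgebraic F E := by
  have hrF : r ∉ Set.range (algebraMap F E) := by
    rintro ⟨x, hx⟩
    exact hF.prop (hx ▸ x.2)
  have key (t : E) (ht : Transcendental F t) : r ∈ F⟮t⟯ := by
    by_contra hmem
    have hle : F ≤ F⟮t⟯.toSubfield := fun x hx => F⟮t⟯.algebraMap_mem ⟨x, hx⟩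
    have htF : t ∈ F := hF.le_of_ge hmem hle (mem_adjoin_simple_self F t)
    exact ht (isAlgebraic_algebraMap (⟨t, htF⟩ : F))
  refine ⟨fun t => ?_⟩
  by_contra ht
  have hr : Transcendental F r := transcendental_of_mem_adjoin ht (key t ht) hrF
  exact notMem_adjoin_sq hr (key _ (hr.pow two_pos))

lemma exists_ringHom_apply_ne {E : Type*} [Field E] [CharZero E] [IsAlgClosed E] {r : E}
    (hr : r ∉ (⊥ : Subfield E)) : ∃ σ : E →+* E, σ r ≠ r := by
  obtain ⟨F, hF⟩ := exists_maximal_subfield_notMem hr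
  have := isAlgebraic_of_maximal_notMem hF
  have : IsAlgClosure F E := ⟨inferInstance, inferInstance⟩
  have : Normal F E := IsAlgClosure.normal F E
  have : IsGalois F E := ⟨⟩
  by_contra! h
  obtain ⟨x, hx⟩ := (InfiniteGalois.mem_range_algebraMap_iff_fixed r).2
    fun f : Gal(E/F) => h (f : E →+* E)
  exact hF.prop (hx ▸ x.2)

/-- `ℂ̃ = ℚ`: the complex numbers admitting a finite adequate set are exactly the rationals. -/
theorem stmt_5 : KTilde ℂ = Set.range ((↑) : ℚ → ℂ) := by
  apply Set.Subset.antisymm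
  · intro r hr
    by_contra hrat
    have hbot : r ∉ (⊥ : Subfield ℂ) := by
      rw [Subfield.bot_eq_of_charZero]
      rintro ⟨q, hq⟩
      exact hrat ⟨q, by simpa using hq⟩
    obtain ⟨σ, hσ⟩ := exists_ringHom_apply_ne hbot
    exact hσ (ringHom_apply_of_mem_KTilde hr σ)
  · rintro _ ⟨q, rfl⟩
    exact SubfieldClass.ratCast_mem (tildeSubfield ℂ) q
end

section
/- For every field K and every n ≥ 1, the cardinality of K̃ₙ is at most (n+1)^(n²+n+1). -/
/-- `K̃ₙ`: the set of `r ∈ K` admitting an adequate set of cardinality at most `n`. -/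
def KTildeN (K : Type*) [Field K] (n : ℕ) : Set K :=
  {r : K | ∃ A : Finset K, A.card ≤ n ∧ IsAdequate r A}

/-- Records of the partial ring structure of a set labelled by `Fin n`: the label of `1`, the
addition table and the multiplication table, with `none` where the element is not in the set. -/
abbrev TableCode (n : ℕ) : Type :=
  Option (Fin n) × (Sym2 (Fin n) → Option (Fin n)) × (Sym2 (Fin n) → Option (Fin n))

open Classical in
/-- The record of `A`, where `e` assigns labels to elements and `x` assigns elements to labels.
Unused labels are allowed: `x` has arbitrary values there, and `e` is arbitrary outside `A`. -/
noncomputable def tableCode {K : Type*} [Field K] {n : ℕ}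
    (A : Finset K) (e : K → Fin n) (x : Fin n → K) : TableCode n :=
  let lab : K → Option (Fin n) := fun a => if a ∈ A then some (e a) else none
  (lab 1,
    fun z => lab (Sym2.lift ⟨fun i j => x i + x j, fun _ _ => add_comm _ _⟩ z),
    fun z => lab (Sym2.lift ⟨fun i j => x i * x j, fun _ _ => mul_comm _ _⟩ z))

theorem exists_labelling {K : Type*} {n : ℕ} [NeZero n] {A : Finset K} {r : K}
    (hr : r ∈ A) (hA : A.card ≤ n) :
    ∃ (e : K → Fin n) (x : Fin n → K), e r = 0 ∧ ∀ a ∈ A, x (e a) = a := by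
  classical
  obtain ⟨φ⟩ : Nonempty (A ↪ Fin n) :=
    Function.Embedding.nonempty_of_card_le (by simpa using hA)
  -- Transposing two labels moves `r` to the label `0`.
  let ψ : A ↪ Fin n := φ.trans (Equiv.swap (φ ⟨r, hr⟩) 0).toEmbedding
  refine ⟨fun a => if h : a ∈ A then ψ ⟨a, h⟩ else 0,
    Function.extend ψ Subtype.val (fun _ => r), ?_, ?_⟩
  · simp [hr, ψ]
  · intro a ha
    simp [ha, ψ.injective.extend_apply]

theorem eq_of_code_eq {K : Type*} [Field K] {n : ℕ} [NeZero n] {r s : K} {A B : Finset K}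
    {e e' : K → Fin n} {x y : Fin n → K}
    (hA : IsAdequate r A) (hs : s ∈ B)
    (her : e r = 0) (hx : ∀ a ∈ A, x (e a) = a)
    (hes : e' s = 0) (hy : ∀ b ∈ B, y (e' b) = b)
    (h : tableCode A e x = tableCode B e' y) : r = s := by
  classical
  -- The record of `B` having label `e c` at the entry `d` pins down `d`.
  have key : ∀ c ∈ A, ∀ d : K, (if c ∈ A then some (e c) else none) =
      (if d ∈ B then some (e' d) else none) → y (e c) = d := by
    intro c hc d hcd
    by_cases hd : d ∈ B
    · rw [if_pos hc, if_pos hd, Option.some.injEq] at hcd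
      rw [hcd, hy d hd]
    · simp [hc, hd] at hcd
  simp only [tableCode, Prod.mk.injEq] at h
  obtain ⟨h1, h2, h3⟩ := h
  have hf := hA.2 (fun a => y (e a)) (fun h => key 1 h 1 h1) ?_ ?_
  · simp only [her] at hf
    rw [← hf, ← hes, hy s hs]
  · intro a ha b hb hab
    have := congrFun h2 s(e a, e b)
    simp only [Sym2.lift_mk, hx a ha, hx b hb] at this
    exact key _ hab _ this
  · intro a ha b hb hab
    have := congrFun h3 s(e a, e b)
    simp only [Sym2.lift_mk, hx a ha, hx b hb] at this
    exact key _ hab _ this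

theorem card_tableCode (n : ℕ) : Nat.card (TableCode n) = (n + 1) ^ (n ^ 2 + n + 1) := by
  have h : (n + 1).choose 2 * 2 = (n + 1) * n := by
    rw [Nat.choose_two_right, Nat.add_sub_cancel]
    exact Nat.div_mul_cancel (mul_comm n (n + 1) ▸ (Nat.even_mul_succ_self n).two_dvd)
  have h' : n ^ 2 + n + 1 = 1 + ((n + 1).choose 2 + (n + 1).choose 2) := by
    rw [← mul_two, h]; ring
  rw [h', pow_add, pow_add, pow_one]
  simp [Nat.card_eq_fintype_card, Sym2.card]

/-- `card K̃ₙ ≤ (n+1)^(n²+n+1)`. -/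
theorem stmt_6 (K : Type*) [Field K] (n : ℕ) (hn : 1 ≤ n) :
    (KTildeN K n).Finite ∧ (KTildeN K n).ncard ≤ (n + 1) ^ (n ^ 2 + n + 1) := by
  have : NeZero n := ⟨by omega⟩
  have hex : ∀ r : KTildeN K n, ∃ (A : Finset K) (e : K → Fin n) (x : Fin n → K),
      IsAdequate r.1 A ∧ e r.1 = 0 ∧ ∀ a ∈ A, x (e a) = a := by
    rintro ⟨r, A, hA, had⟩
    obtain ⟨e, x, h⟩ := exists_labelling had.1 hA
    exact ⟨A, e, x, had, h⟩
  choose A e x had her hx using hex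
  have hinj : Function.Injective fun r : KTildeN K n => tableCode (A r) (e r) (x r) :=
    fun r s h => Subtype.ext
      (eq_of_code_eq (had r) (had s).1 (her r) (hx r) (her s) (hx s) h)
  refine ⟨Set.finite_coe_iff.mp (Finite.of_injective _ hinj), ?_⟩
  rw [← card_tableCode, ← Nat.card_coe_set_eq]
  exact Nat.card_le_card_of_injective _ hinj
end

section
/- For every field K, the set K̃ is countable. -/
/-- The pattern of a finite set with a marked element, enumerated by `Fin n`: the marked index, the
indices of `1`, and the graphs of partial addition and partial multiplication. -/
abbrev Pattern : Type :=
  Σ n : ℕ, Fin n × Set (Fin n) × Set (Fin n × Fin n × Fin n) × Set (Fin n × Fin n × Fin n)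

/-- Some adequate set for `r` admits an enumeration with pattern `c`. -/
def HasPattern {K : Type*} [Field K] (c : Pattern) (r : K) : Prop :=
  ∃ (A : Finset K) (e : Fin c.1 → K), IsAdequate r A ∧ Function.Injective e ∧
    (∀ x, x ∈ A ↔ ∃ k, e k = x) ∧ e c.2.1 = r ∧
    (∀ k, k ∈ c.2.2.1 ↔ e k = 1) ∧
    (∀ k l m, (k, l, m) ∈ c.2.2.2.1 ↔ e k + e l = e m) ∧
    (∀ k l m, (k, l, m) ∈ c.2.2.2.2 ↔ e k * e l = e m)

theorem HasPattern.unique {K : Type*} [Field K] {c : Pattern} {r s : K}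
    (hr : HasPattern c r) (hs : HasPattern c s) : r = s := by
  obtain ⟨A, e, hA, he, hmem, hi, h1, hadd, hmul⟩ := hr
  obtain ⟨-, e', -, -, -, hi', h1', hadd', hmul'⟩ := hs
  -- The comparison map `e k ↦ e' k`, extended by `0` outside the adequate set of `r`.
  have hf : ∀ k, Function.extend e e' 0 (e k) = e' k := fun k => he.extend_apply e' 0 k
  have key := hA.2 (Function.extend e e' 0) ?_ ?_ ?_
  · rw [← hi, hf, hi'] at key
    rw [key, hi]
  · intro h
    obtain ⟨k, hk⟩ := (hmem 1).1 h
    rw [← hk, hf, hk]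
    exact (h1' k).1 ((h1 k).2 hk)
  · intro a ha b hb hab
    obtain ⟨k, rfl⟩ := (hmem a).1 ha
    obtain ⟨l, rfl⟩ := (hmem b).1 hb
    obtain ⟨m, hm⟩ := (hmem _).1 hab
    rw [← hm, hf, hf, hf]
    exact ((hadd' k l m).1 ((hadd k l m).2 hm.symm)).symm
  · intro a ha b hb hab
    obtain ⟨k, rfl⟩ := (hmem a).1 ha
    obtain ⟨l, rfl⟩ := (hmem b).1 hb
    obtain ⟨m, hm⟩ := (hmem _).1 hab
    rw [← hm, hf, hf, hf]
    exact ((hmul' k l m).1 ((hmul k l m).2 hm.symm)).symm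

theorem IsAdequate.exists_hasPattern {K : Type*} [Field K] {r : K} {A : Finset K}
    (h : IsAdequate r A) : ∃ c : Pattern, HasPattern c r := by
  let e : Fin A.card → K := fun k => A.equivFin.symm k
  refine ⟨⟨A.card, A.equivFin ⟨r, h.1⟩, {k | e k = 1}, {t | e t.1 + e t.2.1 = e t.2.2},
    {t | e t.1 * e t.2.1 = e t.2.2}⟩, A, e, h, ?_, ?_, ?_, ?_, ?_, ?_⟩
  · exact Subtype.val_injective.comp A.equivFin.symm.injective
  · intro x
    constructor
    · intro hx
      exact ⟨A.equivFin ⟨x, hx⟩, by simp [e]⟩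
    · rintro ⟨k, rfl⟩
      exact (A.equivFin.symm k).2
  · simp [e]
  · exact fun _ => Iff.rfl
  · exact fun _ _ _ => Iff.rfl
  · exact fun _ _ _ => Iff.rfl

/-- For every field `K`, the set `K̃` is countable. -/
theorem stmt_7 (K : Type*) [Field K] : (KTilde K).Countable := by
  have hU : (⋃ c : Pattern, {r : K | HasPattern c r}).Countable :=
    Set.countable_iUnion fun c =>
      Set.Subsingleton.countable fun _ hr _ hs => HasPattern.unique hr hs
  refine hU.mono ?_
  rintro r ⟨A, hA⟩
  exact Set.mem_iUnion.2 hA.exists_hasPattern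
end

section
/- Let K be a field of characteristic zero such that every element of K is algebraic over ℚ. Then K̃ = {x ∈ K : σ(x) = x for every field automorphism σ of K}. -/
open Filter in
/-- The ultrapower of an algebraic extension of `ℚ` contains no new roots of rational polynomials,
so a ring homomorphism from `K` to its ultrapower takes values in constant germs. -/
theorem exists_ringHom_of_germ {K ι : Type*} [Field K] [CharZero K]
    (halg : ∀ x : K, IsAlgebraic ℚ x) (U : Ultrafilter ι)
    (φ : K →+* Germ (U : Filter ι) K) :
    ∃ σ : K →+* K, ∀ x, φ x = ((σ x : K) : Germ (U : Filter ι) K) := by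
  have key : ∀ x, ∃ y : K, φ x = (y : Germ (U : Filter ι) K) := by
    intro x
    obtain ⟨p, hp0, hp⟩ := halg x
    obtain ⟨g, hg⟩ : ∃ g : ι → K, (g : Germ (U : Filter ι) K) = φ x :=
      Quotient.exists_rep (φ x)
    let c : (ι → K) →+* Germ (U : Filter ι) K := Germ.coeRingHom (U : Filter ι)
    have hcg : c g = φ x := hg
    have h1 : c (p.eval₂ (algebraMap ℚ (ι → K)) g) = 0 := by
      rw [Polynomial.hom_eval₂, hcg]
      have h2 : φ (p.eval₂ (algebraMap ℚ K) x) = 0 := by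
        rw [← Polynomial.aeval_def, hp, map_zero]
      rw [Polynomial.hom_eval₂] at h2
      -- any two ring homomorphisms out of `ℚ` agree
      rwa [Subsingleton.elim (c.comp (algebraMap ℚ (ι → K))) (φ.comp (algebraMap ℚ K))]
    have h3 : ∀ᶠ i in (U : Filter ι), g i ∈ p.rootSet K := by
      have h4 : p.eval₂ (algebraMap ℚ (ι → K)) g =ᶠ[(U : Filter ι)] 0 :=
        Germ.coe_eq.1 h1
      filter_upwards [h4] with i hi
      rw [Polynomial.mem_rootSet]
      refine ⟨hp0, ?_⟩
      have h5 := Polynomial.hom_eval₂ p (algebraMap ℚ (ι → K)) (Pi.evalRingHom (fun _ => K) i) g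
      rw [Polynomial.aeval_def, Subsingleton.elim (algebraMap ℚ K)
        ((Pi.evalRingHom (fun _ => K) i).comp (algebraMap ℚ (ι → K)))]
      exact h5.symm.trans hi
    have h6 : (⋃ y ∈ p.rootSet K, {i | g i = y}) ∈ U := by
      filter_upwards [h3] with i hi
      simpa using hi
    obtain ⟨y, -, hy⟩ := (Ultrafilter.finite_biUnion_mem_iff (p.rootSet_finite K)).1 h6
    exact ⟨y, hg.symm.trans (Germ.coe_eq.2 hy)⟩
  choose s hs using key
  have inj : ∀ a b : K, (a : Germ (U : Filter ι) K) = (b : Germ (U : Filter ι) K) → a = b :=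
    fun a b h => Germ.const_inj.1 h
  exact ⟨{ toFun := s
           map_one' := inj _ _ (by rw [← hs, map_one]; rfl)
           map_zero' := inj _ _ (by rw [← hs, map_zero]; rfl)
           map_mul' := fun a b => inj _ _ (by rw [← hs, map_mul, hs a, hs b]; rfl)
           map_add' := fun a b => inj _ _ (by rw [← hs, map_add, hs a, hs b]; rfl) }, hs⟩

/-- If `K` has characteristic zero and every element of `K` is algebraic over `ℚ`, then
`K̃` is the set of elements fixed by all field automorphisms of `K`. -/
theorem stmt_8 (K : Type*) [Field K] [CharZero K] (halg : ∀ x : K, IsAlgebraic ℚ x) :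
    KTilde K = {x : K | ∀ σ : K ≃+* K, σ x = x} := by
  classical
  ext r
  constructor
  · rintro ⟨A, -, hA⟩ σ
    exact hA σ (fun _ => map_one σ) (fun a _ b _ _ => map_add σ a b)
      (fun a _ b _ _ => map_mul σ a b)
  · intro hr
    by_contra hcon
    have hno : ∀ A : Finset K, ∃ f : K → K,
        ((1 : K) ∈ A → f 1 = 1) ∧
        (∀ a ∈ A, ∀ b ∈ A, a + b ∈ A → f (a + b) = f a + f b) ∧
        (∀ a ∈ A, ∀ b ∈ A, a * b ∈ A → f (a * b) = f a * f b) ∧ f r ≠ r := by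
      intro A
      by_contra hA
      -- `A` itself need not contain `r`; adding `r` only strengthens the conditions on `f`
      refine hcon ⟨insert r A, Finset.mem_insert_self r A, fun f h1 h2 h3 => ?_⟩
      by_contra hfr
      have hsub : ∀ a ∈ A, a ∈ insert r A := fun a ha => Finset.mem_insert_of_mem ha
      exact hA ⟨f, fun h => h1 (hsub _ h),
        fun a ha b hb hab => h2 a (hsub _ ha) b (hsub _ hb) (hsub _ hab),
        fun a ha b hb hab => h3 a (hsub _ ha) b (hsub _ hb) (hsub _ hab), hfr⟩
    choose f f1 fadd fmul fr using hno
    let U : Ultrafilter (Finset K) := Ultrafilter.of Filter.atTop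
    have hU : ∀ x : K, ∀ᶠ A in (U : Filter (Finset K)), x ∈ A := fun x =>
      Ultrafilter.of_le Filter.atTop
        ((Filter.eventually_ge_atTop ({x} : Finset K)).mono
          fun A hA => hA (Finset.mem_singleton_self x))
    let e : K → Filter.Germ (U : Filter (Finset K)) K := fun x =>
      ((fun A => f A x : Finset K → K) : Filter.Germ (U : Filter (Finset K)) K)
    have e1 : e 1 = 1 := Filter.Germ.coe_eq.2 <| by
      filter_upwards [hU 1] with A h1 using f1 A h1
    have e0 : e 0 = 0 := Filter.Germ.coe_eq.2 <| by
      filter_upwards [hU 0] with A h0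
      simpa using fadd A 0 h0 0 h0 (by simpa using h0)
    have emul : ∀ a b, e (a * b) = e a * e b := fun a b => Filter.Germ.coe_eq.2 <| by
      filter_upwards [hU a, hU b, hU (a * b)] with A ha hb hab using fmul A a ha b hb hab
    have eadd : ∀ a b, e (a + b) = e a + e b := fun a b => Filter.Germ.coe_eq.2 <| by
      filter_upwards [hU a, hU b, hU (a + b)] with A ha hb hab using fadd A a ha b hb hab
    let φ : K →+* Filter.Germ (U : Filter (Finset K)) K :=
      { toFun := e, map_one' := e1, map_zero' := e0, map_mul' := emul, map_add' := eadd }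
    obtain ⟨σ, hσ⟩ := exists_ringHom_of_germ halg U φ
    have : Algebra.IsAlgebraic ℚ K := ⟨halg⟩
    have hbij : Function.Bijective σ := Algebra.IsAlgebraic.algHom_bijective σ.toRatAlgHom
    have hσr : σ r = r := hr (RingEquiv.ofBijective σ hbij)
    have hev : ∀ᶠ A in (U : Filter (Finset K)), f A r = σ r := Filter.Germ.coe_eq.1 (hσ r)
    obtain ⟨A, hA⟩ := hev.exists
    exact fr A (hA.trans hσr)
end

section
/- Let K be a field containing an algebraically closed subfield. Then K̃ equals the prime subfield of K (the smallest subfield of K). -/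
open Classical in
/-- An element of an algebraic extension of a perfect field `k` on which all embeddings into an
algebraically closed field agree has only one conjugate, so it lies in `k`. -/
theorem mem_range_of_forall_algHom_eq {k L F : Type*} [Field k] [PerfectField k] [Field L]
    [Field F] [Algebra k L] [Algebra k F] [Algebra.IsAlgebraic k L] [IsAlgClosed F]
    (s : L) (t : F) (h : ∀ τ : L →ₐ[k] F, τ s = t) : s ∈ (algebraMap k L).range := by
  have hint : IsIntegral k s := Algebra.IsIntegral.isIntegral s
  have hsep : (minpoly k s).Separable := PerfectField.separable_of_irreducible
    (minpoly.irreducible hint)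
  have hcard : Fintype.card ((minpoly k s).rootSet F) = (minpoly k s).natDegree :=
    Polynomial.card_rootSet_eq_natDegree hsep (IsAlgClosed.splits _)
  have hle : Fintype.card ((minpoly k s).rootSet F) ≤ 1 := by
    rw [Fintype.card_le_one_iff]
    have key : ∀ x ∈ (minpoly k s).rootSet F, x = t := by
      intro x hx
      rw [← Algebra.IsAlgebraic.range_eval_eq_rootSet_minpoly F s] at hx
      obtain ⟨τ, rfl⟩ := hx
      exact h τ
    rintro ⟨x, hx⟩ ⟨y, hy⟩
    exact Subtype.ext ((key x hx).trans (key y hy).symm)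
  exact minpoly.natDegree_eq_one_iff.mp
    (le_antisymm (hcard ▸ hle) (minpoly.natDegree_pos hint))

/-- Ring homomorphisms `k[A] → K` satisfy the conditions in `IsAdequate` on `A`, so they fix `r`. -/
theorem IsAdequate.ringHom_apply {k K : Type*} [Field k] [Field K] [Algebra k K] {r : K}
    {A : Finset K} (h : IsAdequate r A) (φ : Algebra.adjoin k (A : Set K) →+* K) :
    φ ⟨r, Algebra.subset_adjoin h.1⟩ = r := by
  classical
  have hA : ∀ a ∈ A, a ∈ Algebra.adjoin k (A : Set K) := fun a ha => Algebra.subset_adjoin ha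
  have := h.2 (fun x => if hx : x ∈ Algebra.adjoin k (A : Set K) then φ ⟨x, hx⟩ else 0) ?_ ?_ ?_
  · simpa only [dif_pos (hA r h.1)] using this
  · intro h1
    simp only [dif_pos (hA _ h1)]
    exact map_one φ
  · intro a ha b hb hab
    simp only [dif_pos (hA _ ha), dif_pos (hA _ hb), dif_pos (hA _ hab)]
    exact map_add φ ⟨a, hA _ ha⟩ ⟨b, hA _ hb⟩
  · intro a ha b hb hab
    simp only [dif_pos (hA _ ha), dif_pos (hA _ hb), dif_pos (hA _ hab)]
    exact map_mul φ ⟨a, hA _ ha⟩ ⟨b, hA _ hb⟩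

theorem IsAdequate.mem_range_of_algHom {k K F L : Type*} [Field k] [PerfectField k] [Field K]
    [Field F] [Field L] [Algebra k K] [Algebra k F] [Algebra k L] [Algebra.IsAlgebraic k L]
    [IsAlgClosed F] (i : F →ₐ[k] K) {r : K} {A : Finset K} (h : IsAdequate r A)
    (π : Algebra.adjoin k (A : Set K) →ₐ[k] L) : r ∈ (algebraMap k K).range := by
  have key : ∀ τ : L →ₐ[k] F, i (τ (π ⟨r, Algebra.subset_adjoin h.1⟩)) = r := fun τ =>
    h.ringHom_apply ((i.comp τ).comp π).toRingHom
  let τ₀ : L →ₐ[k] F := IsAlgClosed.lift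
  obtain ⟨c, hc⟩ := mem_range_of_forall_algHom_eq (k := k) (F := F) _ _
    (fun τ => i.injective ((key τ).trans (key τ₀).symm))
  refine ⟨c, ?_⟩
  rw [← key τ₀, ← hc, AlgHom.commutes, AlgHom.commutes]

theorem IsAdequate.mem_range {k K F : Type*} [Field k] [PerfectField k] [Field K] [Field F]
    [Algebra k K] [Algebra k F] [IsAlgClosed F] (i : F →ₐ[k] K) {r : K} {A : Finset K}
    (h : IsAdequate r A) : r ∈ (algebraMap k K).range := by
  have hft : Algebra.FiniteType k (Algebra.adjoin k (A : Set K)) :=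
    (Subalgebra.fg_iff_finiteType _).mp (Subalgebra.fg_adjoin_finset A)
  obtain ⟨M, hM⟩ := Ideal.exists_maximal (Algebra.adjoin k (A : Set K))
  let _ : Field (Algebra.adjoin k (A : Set K) ⧸ M) := Ideal.Quotient.field M
  have hft' : Algebra.FiniteType k (Algebra.adjoin k (A : Set K) ⧸ M) :=
    hft.of_surjective (Ideal.Quotient.mkₐ k M) Ideal.Quotient.mk_surjective
  -- Zariski's lemma
  have hfin := finite_of_finite_type_of_isJacobsonRing k (Algebra.adjoin k (A : Set K) ⧸ M)
  have halg := Algebra.IsAlgebraic.of_finite k (Algebra.adjoin k (A : Set K) ⧸ M)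
  exact h.mem_range_of_algHom i (Ideal.Quotient.mkₐ k M)

/-- Admissibility passes to subsets, so the hypotheses on `f` over a larger set still force
`f r = r`. -/
theorem IsAdequate.apply_of_subset {K : Type*} [Field K] {r : K} {A B : Finset K}
    (h : IsAdequate r A) (hAB : A ⊆ B) {f : K → K} (h1 : (1 : K) ∈ B → f 1 = 1)
    (ha : ∀ a ∈ B, ∀ b ∈ B, a + b ∈ B → f (a + b) = f a + f b)
    (hm : ∀ a ∈ B, ∀ b ∈ B, a * b ∈ B → f (a * b) = f a * f b) : f r = r :=
  h.2 f (fun h => h1 (hAB h))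
    (fun a h b h' h'' => ha a (hAB h) b (hAB h') (hAB h''))
    (fun a h b h' h'' => hm a (hAB h) b (hAB h') (hAB h''))

open Classical in
/-- `K̃` as a subfield of `K`. -/
def kTildeSubfield (K : Type*) [Field K] : Subfield K where
  carrier := KTilde K
  one_mem' := ⟨{1}, by simp, fun f h _ _ => h (by simp)⟩
  zero_mem' := ⟨{0}, by simp, fun f _ h _ => by simpa using h 0 (by simp) 0 (by simp) (by simp)⟩
  add_mem' := by
    rintro r s ⟨A, hA⟩ ⟨B, hB⟩
    refine ⟨insert (r + s) (A ∪ B), by simp, fun f h1 ha hm => ?_⟩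
    rw [ha r (by simp [hA.1]) s (by simp [hB.1]) (by simp),
      hA.apply_of_subset (by grind) h1 ha hm, hB.apply_of_subset (by grind) h1 ha hm]
  mul_mem' := by
    rintro r s ⟨A, hA⟩ ⟨B, hB⟩
    refine ⟨insert (r * s) (A ∪ B), by simp, fun f h1 ha hm => ?_⟩
    rw [hm r (by simp [hA.1]) s (by simp [hB.1]) (by simp),
      hA.apply_of_subset (by grind) h1 ha hm, hB.apply_of_subset (by grind) h1 ha hm]
  neg_mem' := by
    rintro r ⟨A, hA⟩
    refine ⟨insert (-r) (insert 0 A), by simp, fun f h1 ha hm => ?_⟩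
    have h0 : f 0 = 0 := by simpa using ha 0 (by simp) 0 (by simp) (by simp)
    have := ha r (by simp [hA.1]) (-r) (by simp) (by simp)
    rw [add_neg_cancel, h0, hA.apply_of_subset (by grind) h1 ha hm] at this
    exact (neg_eq_of_add_eq_zero_right this.symm).symm
  inv_mem' := by
    rintro r ⟨A, hA⟩
    by_cases hr : r = 0
    · subst hr
      rw [inv_zero]
      exact ⟨A, hA⟩
    refine ⟨insert r⁻¹ (insert 1 A), by simp, fun f h1 ha hm => ?_⟩
    have := hm r (by simp [hA.1]) r⁻¹ (by simp) (by simp [hr])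
    rw [mul_inv_cancel₀ hr, h1 (by simp), hA.apply_of_subset (by grind) h1 ha hm] at this
    exact (inv_eq_of_mul_eq_one_right this.symm).symm

/-- If some subfield of `K` is algebraically closed, then `K̃` is the prime subfield of `K`. -/
theorem stmt_9 (K : Type*) [Field K] (F : Subfield K) (hF : IsAlgClosed F) :
    KTilde K = ((⊥ : Subfield K) : Set K) := by
  apply Set.Subset.antisymm
  · rintro r ⟨A, hA⟩
    obtain ⟨p, hp⟩ := CharP.exists K
    rcases CharP.char_is_prime_or_zero K p with hpp | rfl
    · have : Fact p.Prime := ⟨hpp⟩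
      let _ : Algebra (ZMod p) K := ZMod.algebra K p
      have : CharP F p := (F.subtype.charP_iff F.subtype.injective p).mpr hp
      let _ : Algebra (ZMod p) F := ZMod.algebra F p
      let i : F →ₐ[ZMod p] K :=
        { F.subtype with commutes' := fun c => congrArg (fun g : ZMod p →+* K => g c) (Subsingleton.elim
              (F.subtype.comp (algebraMap (ZMod p) F)) (algebraMap (ZMod p) K)) }
      obtain ⟨c, rfl⟩ := hA.mem_range i
      obtain ⟨n, rfl⟩ := ZMod.natCast_zmod_surjective c
      rw [map_natCast]
      exact natCast_mem (⊥ : Subfield K) n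
    · have : CharZero K := CharP.charP_to_charZero K
      have : CharZero F := charZero_of_injective_ringHom (f := (algebraMap ℕ F)) (fun a b h => by
        have := congrArg F.subtype h
        simpa using this)
      obtain ⟨c, rfl⟩ := hA.mem_range (k := ℚ) F.subtype.toRatAlgHom
      rw [eq_ratCast]
      exact SubfieldClass.ratCast_mem (⊥ : Subfield K) c
  · exact fun x hx => (bot_le : (⊥ : Subfield K) ≤ kTildeSubfield K) hx
end

section
/- Let K be a field and let r ∈ K̃. Then there exist n ≥ 1 and a finite system of equations in variables x₁, …, xₙ, each of one of the forms xᵢ + xⱼ = xₖ, xᵢ · xⱼ = xₖ, or xᵢ = 1, such that for all (w₁, …, wₙ) ∈ Kⁿ, the system is satisfied if and only if ... and moreover the set of w₁ ∈ K for which there exist w₂, …, wₙ ∈ K satisfying all the equations is exactly {r}. -/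
/-- Every `r ∈ K̃` is the unique first coordinate of a solution of a finite system of
equations of the forms `xᵢ = 1`, `xᵢ + xⱼ = xₖ`, `xᵢ · xⱼ = xₖ` in `n + 1 ≥ 1` variables. -/
theorem stmt_10 (K : Type*) [Field K] (r : K) (hr : r ∈ KTilde K) :
    ∃ (n : ℕ) (S : Finset (Fin (n + 1))) (T U : Finset (Fin (n + 1) × Fin (n + 1) × Fin (n + 1))),
      {w₁ : K | ∃ w : Fin (n + 1) → K, w 0 = w₁ ∧
        (∀ i ∈ S, w i = 1) ∧
        (∀ t ∈ T, w t.1 + w t.2.1 = w t.2.2) ∧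
        (∀ t ∈ U, w t.1 * w t.2.1 = w t.2.2)} = {r} := by
  classical
  obtain ⟨A, hrA, hA⟩ := hr
  obtain ⟨n, hn⟩ : ∃ n, A.card = n + 1 :=
    Nat.exists_eq_add_one.mpr (Finset.card_pos.mpr ⟨r, hrA⟩)
  obtain ⟨e, he⟩ : ∃ e : Fin (n + 1) ≃ A, e 0 = ⟨r, hrA⟩ := by
    let e₀ := (A.equivFinOfCardEq hn).symm
    exact ⟨(Equiv.swap 0 (e₀.symm ⟨r, hrA⟩)).trans e₀, by simp⟩
  have he0 : (e 0 : K) = r := by rw [he]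
  refine ⟨n, Finset.univ.filter fun i => (e i : K) = 1,
    Finset.univ.filter fun t => (e t.1 : K) + e t.2.1 = e t.2.2,
    Finset.univ.filter fun t => (e t.1 : K) * e t.2.1 = e t.2.2, ?_⟩
  ext w₁
  simp only [Finset.mem_filter, Finset.mem_univ, true_and, Set.mem_setOf_eq,
    Set.mem_singleton_iff]
  constructor
  · rintro ⟨w, rfl, hS, hT, hU⟩
    -- The values of `f` off `A` play no role.
    let f : K → K := fun a => if h : a ∈ A then w (e.symm ⟨a, h⟩) else 0
    have hf : ∀ a (h : a ∈ A), f a = w (e.symm ⟨a, h⟩) := fun a h => dif_pos h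
    have hfr : f r = r := by
      refine hA f ?_ ?_ ?_
      · intro h
        rw [hf 1 h]
        exact hS _ (by simp)
      · intro a ha b hb hab
        rw [hf a ha, hf b hb, hf _ hab]
        exact (hT (e.symm ⟨a, ha⟩, e.symm ⟨b, hb⟩, e.symm ⟨a + b, hab⟩) (by simp)).symm
      · intro a ha b hb hab
        rw [hf a ha, hf b hb, hf _ hab]
        exact (hU (e.symm ⟨a, ha⟩, e.symm ⟨b, hb⟩, e.symm ⟨a * b, hab⟩) (by simp)).symm
    rwa [hf r hrA, ← he, e.symm_apply_apply] at hfr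
  · rintro rfl
    exact ⟨fun i => e i, he0, fun _ h => h, fun _ h => h, fun _ h => h⟩
end

section
/- Let K be a field of characteristic zero and let r ∈ K̃. Then there exist m ≥ 1 and a polynomial T with rational coefficients in variables x, x₁, …, xₘ such that {w ∈ K : ∃ w₁, …, wₘ ∈ K with T(w, w₁, …, wₘ) = 0} = {r}. -/
/-- The subset of `K^σ` described by `P` is the zero locus of a single polynomial over `ℚ`. -/
def HasEquation {K σ : Type*} [Field K] [CharZero K] (P : (σ → K) → Prop) : Prop :=
  ∃ T : MvPolynomial σ ℚ, ∀ v : σ → K, MvPolynomial.aeval v T = 0 ↔ P v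

/-- The homogenization of a non-constant polynomial without roots is an anisotropic binary form. -/
lemma sum_eq_zero_iff {K : Type*} [Field K] [CharZero K] (p : Polynomial ℚ)
    (hp : 0 < p.natDegree) (hroot : ∀ x : K, Polynomial.aeval x p ≠ 0) (x y : K) :
    ∑ i ∈ Finset.range (p.natDegree + 1),
      algebraMap ℚ K (p.coeff i) * x ^ i * y ^ (p.natDegree - i) = 0 ↔ x = 0 ∧ y = 0 := by
  constructor
  · intro h
    have hy : y = 0 := by
      by_contra hy
      apply hroot (x / y)
      have : y ^ p.natDegree * Polynomial.aeval (x / y) p = 0 := by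
        rw [← h, Polynomial.aeval_eq_sum_range, Finset.mul_sum]
        refine Finset.sum_congr rfl fun i hi => ?_
        have hi' : i ≤ p.natDegree := by
          simpa [Nat.lt_succ_iff] using hi
        obtain ⟨k, hk⟩ := Nat.exists_eq_add_of_le hi'
        rw [hk, Nat.add_sub_cancel_left, Algebra.smul_def, pow_add]
        rw [div_pow]
        field_simp
      exact (mul_eq_zero.mp this).resolve_left (pow_ne_zero _ hy)
    refine ⟨?_, hy⟩
    subst hy
    rw [Finset.sum_range_succ, Finset.sum_eq_zero] at h
    · have hne : p.leadingCoeff ≠ 0 := by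
        rw [Ne, Polynomial.leadingCoeff_eq_zero]
        rintro rfl
        simp at hp
      have hne' : algebraMap ℚ K (p.coeff p.natDegree) ≠ 0 :=
        (map_ne_zero _).mpr hne
      simp only [zero_add, Nat.sub_self, pow_zero, mul_one] at h
      exact eq_zero_of_pow_eq_zero ((mul_eq_zero.mp h).resolve_left hne')
    · intro i hi
      have : p.natDegree - i ≠ 0 := by
        have := Finset.mem_range.mp hi
        omega
      rw [zero_pow this, mul_zero]
  · rintro ⟨rfl, rfl⟩
    refine Finset.sum_eq_zero fun i _ => ?_
    rcases Nat.eq_zero_or_pos i with rfl | hi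
    · rw [Nat.sub_zero, zero_pow hp.ne', mul_zero]
    · rw [zero_pow hi.ne', mul_zero, zero_mul]

lemma HasEquation.true {K σ : Type*} [Field K] [CharZero K] :
    HasEquation (fun _ : σ → K => True) := ⟨0, by simp⟩

lemma HasEquation.eq {K σ : Type*} [Field K] [CharZero K] (S T : MvPolynomial σ ℚ) :
    HasEquation (fun v : σ → K => MvPolynomial.aeval v S = MvPolynomial.aeval v T) :=
  ⟨S - T, by simp [sub_eq_zero]⟩

lemma HasEquation.and {K σ : Type*} [Field K] [CharZero K] (p : Polynomial ℚ)
    (hp : 0 < p.natDegree) (hroot : ∀ x : K, Polynomial.aeval x p ≠ 0)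
    {P Q : (σ → K) → Prop} (hP : HasEquation P) (hQ : HasEquation Q) :
    HasEquation (fun v => P v ∧ Q v) := by
  obtain ⟨S, hS⟩ := hP
  obtain ⟨T, hT⟩ := hQ
  refine ⟨∑ i ∈ Finset.range (p.natDegree + 1),
    algebraMap ℚ _ (p.coeff i) * S ^ i * T ^ (p.natDegree - i), fun v => ?_⟩
  change _ ↔ P v ∧ Q v
  rw [← hS, ← hT, ← sum_eq_zero_iff p hp hroot]
  simp only [map_sum, map_mul, map_pow, AlgHom.commutes]

lemma HasEquation.forall_mem {K σ ι : Type*} [Field K] [CharZero K] (p : Polynomial ℚ)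
    (hp : 0 < p.natDegree) (hroot : ∀ x : K, Polynomial.aeval x p ≠ 0)
    (s : Finset ι) (P : ι → (σ → K) → Prop) (hP : ∀ i, HasEquation (P i)) :
    HasEquation (fun v => ∀ i ∈ s, P i v) := by
  classical
  induction s using Finset.induction_on with
  | empty => simpa using HasEquation.true
  | insert a s _ ih =>
    simpa only [Finset.forall_mem_insert] using (hP a).and p hp hroot ih

lemma HasEquation.imp {K σ : Type*} [Field K] [CharZero K] (c : Prop)
    {P : (σ → K) → Prop} (hP : HasEquation P) : HasEquation (fun v => c → P v) := by
  by_cases hc : c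
  · simpa [hc] using hP
  · simpa [hc] using HasEquation.true

lemma nonempty_algHom_of_roots {K : Type*} [Field K] [CharZero K]
    (h : ∀ p : Polynomial ℚ, Irreducible p → ∃ x : K, Polynomial.aeval x p = 0)
    (L : Type*) [Field L] [Algebra ℚ L] [FiniteDimensional ℚ L] : Nonempty (L →ₐ[ℚ] K) := by
  let pb := Field.powerBasisOfFiniteOfSeparable ℚ L
  obtain ⟨x, hx⟩ := h (minpoly ℚ pb.gen)
    (minpoly.irreducible (Algebra.IsIntegral.isIntegral pb.gen))
  exact ⟨pb.lift x hx⟩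

universe u

/-- By Zariski's lemma, a nonzero finitely generated `F`-algebra maps to a finite Galois extension
of `F`. It is applied with `F = ℚ`; over a variable field, only one `F`-algebra structure is
available on each field involved. -/
lemma exists_algHom_galois (F : Type*) [Field F] [CharZero F] (R : Type u) [CommRing R]
    [Nontrivial R] [Algebra F R] [Algebra.FiniteType F R] :
    ∃ (N : Type u) (_ : Field N) (_ : Algebra F N),
      FiniteDimensional F N ∧ IsGalois F N ∧ Nonempty (R →ₐ[F] N) := by
  obtain ⟨M, hM⟩ := Ideal.exists_maximal R
  let π : R →ₐ[F] R ⧸ M := Ideal.Quotient.mkₐ F M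
  have hπ : Function.Surjective π := Ideal.Quotient.mkₐ_surjective F M
  have hft : Algebra.FiniteType F (R ⧸ M) :=
    Algebra.FiniteType.of_surjective π hπ
  let := Ideal.Quotient.field M
  have : FiniteDimensional F (R ⧸ M) := finite_of_finite_type_of_isJacobsonRing F (R ⧸ M)
  let N := IntermediateField.normalClosure F (R ⧸ M) (AlgebraicClosure (R ⧸ M))
  have : Normal F N := normalClosure.normal F (R ⧸ M) (AlgebraicClosure (R ⧸ M))
  have : IsGalois F N := ⟨⟩
  exact ⟨N, inferInstance, inferInstance, inferInstance, this,
    ⟨(IsScalarTower.toAlgHom F (R ⧸ M) N).comp π⟩⟩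

/-- If every irreducible rational polynomial has a root in `K`, then `K̃ ⊆ ℚ`. -/
lemma mem_range_of_roots {K : Type*} [Field K] [CharZero K]
    (h : ∀ p : Polynomial ℚ, Irreducible p → ∃ x : K, Polynomial.aeval x p = 0)
    {r : K} {A : Finset K} (hA : IsAdequate r A) : ∃ q : ℚ, algebraMap ℚ K q = r := by
  classical
  obtain ⟨hrA, hA⟩ := hA
  let R := Algebra.adjoin ℚ (A : Set K)
  have hmem : ∀ a ∈ A, a ∈ R := fun a ha => Algebra.subset_adjoin ha
  have hft : Algebra.FiniteType ℚ R :=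
    (Subalgebra.fg_iff_finiteType _).mp (Subalgebra.fg_adjoin_finset A)
  -- Ring homomorphisms out of `ℚ[A]` restrict to maps on `A` as in the definition of adequacy.
  have key : ∀ g : R →ₐ[ℚ] K, g ⟨r, hmem r hrA⟩ = r := by
    intro g
    have := hA (fun a => if ha : a ∈ R then g ⟨a, ha⟩ else 0) ?_ ?_ ?_
    · simpa [hmem r hrA] using this
    · intro h1
      rw [dif_pos (hmem 1 h1)]
      exact map_one g
    · intro a ha b hb hab
      simp only [dif_pos (hmem _ ha), dif_pos (hmem _ hb), dif_pos (hmem _ hab)]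
      rw [← map_add]; rfl
    · intro a ha b hb hab
      simp only [dif_pos (hmem _ ha), dif_pos (hmem _ hb), dif_pos (hmem _ hab)]
      rw [← map_mul]; rfl
  obtain ⟨N, _, _, _, _, ⟨i⟩⟩ := exists_algHom_galois ℚ R
  obtain ⟨j⟩ := nonempty_algHom_of_roots h N
  have hfix : ∀ σ : N ≃ₐ[ℚ] N, σ (i ⟨r, hmem r hrA⟩) = i ⟨r, hmem r hrA⟩ := by
    intro σ
    apply j.injective
    exact (key ((j.comp σ.toAlgHom).comp i)).trans (key (j.comp i)).symm
  obtain ⟨q, hq⟩ := (IsGalois.mem_range_algebraMap_iff_fixed (F := ℚ) (E := N) _).mpr hfix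
  refine ⟨q, ?_⟩
  rw [← key (j.comp i), AlgHom.comp_apply, ← hq, AlgHom.commutes]

/-- If some non-constant `p ∈ ℚ[X]` has no root in `K`, the system attached to an adequate set
merges into one equation. -/
lemma exists_equation_of_no_root {K : Type*} [Field K] [CharZero K] (p : Polynomial ℚ)
    (hp : 0 < p.natDegree) (hroot : ∀ x : K, Polynomial.aeval x p ≠ 0)
    {r : K} {A : Finset K} (hA : IsAdequate r A) :
    ∃ T : MvPolynomial (Fin (A.card + 1)) ℚ,
      {w : K | ∃ ws : Fin A.card → K, MvPolynomial.aeval (Fin.cons w ws) T = 0} = {r} := by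
  classical
  obtain ⟨hrA, hA⟩ := hA
  -- The unknown of `a ∈ A` is `X a`; the junk value outside `A` is never used.
  let X : K → MvPolynomial (Fin (A.card + 1)) ℚ := fun a =>
    if ha : a ∈ A then MvPolynomial.X (A.equivFin ⟨a, ha⟩).succ else 0
  have hX : ∀ (w : K) (ws : Fin A.card → K), ∀ a, ∀ ha : a ∈ A,
      MvPolynomial.aeval (Fin.cons w ws : Fin (A.card + 1) → K) (X a) =
        ws (A.equivFin ⟨a, ha⟩) := by
    intro w ws a ha
    simp [X, ha]
  have H : HasEquation (fun v : Fin (A.card + 1) → K =>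
      (MvPolynomial.aeval v (MvPolynomial.X 0 : MvPolynomial _ ℚ) = MvPolynomial.aeval v (X r)) ∧
      (((1 : K) ∈ A → MvPolynomial.aeval v (X 1) =
        MvPolynomial.aeval v (1 : MvPolynomial (Fin (A.card + 1)) ℚ)) ∧
      ((∀ a ∈ A, ∀ b ∈ A, a + b ∈ A →
        MvPolynomial.aeval v (X (a + b)) = MvPolynomial.aeval v (X a + X b)) ∧
      (∀ a ∈ A, ∀ b ∈ A, a * b ∈ A →
        MvPolynomial.aeval v (X (a * b)) = MvPolynomial.aeval v (X a * X b))))) := by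
    refine (HasEquation.eq _ _).and p hp hroot <| ((HasEquation.eq _ _).imp _).and p hp hroot <|
      HasEquation.and p hp hroot ?_ ?_
    · exact .forall_mem p hp hroot A _ fun a => .forall_mem p hp hroot A _ fun b =>
        (HasEquation.eq _ _).imp _
    · exact .forall_mem p hp hroot A _ fun a => .forall_mem p hp hroot A _ fun b =>
        (HasEquation.eq _ _).imp _
  obtain ⟨T, hT⟩ := H
  refine ⟨T, ?_⟩
  ext w
  simp only [Set.mem_ofPred_eq, Set.mem_singleton_iff, hT]
  constructor
  · rintro ⟨ws, h0, h1, h2, h3⟩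
    have := hA (fun a => MvPolynomial.aeval (Fin.cons w ws : Fin (A.card + 1) → K) (X a))
      (fun h => by simpa using h1 h)
      (fun a ha b hb hab => by simpa using h2 a ha b hb hab)
      (fun a ha b hb hab => by simpa using h3 a ha b hb hab)
    rw [← this, ← h0]
    simp
  · rintro rfl
    have hv : ∀ a ∈ A, MvPolynomial.aeval
        (Fin.cons w (fun i => (A.equivFin.symm i : K)) : Fin (A.card + 1) → K) (X a) = a := by
      intro a ha
      rw [hX _ _ a ha]
      simp
    refine ⟨fun i => (A.equivFin.symm i : K), ?_, ?_, ?_, ?_⟩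
    · rw [hv _ hrA]; simp
    · intro h
      rw [hv _ h, map_one]
    · intro a ha b hb hab
      rw [map_add, hv _ ha, hv _ hb, hv _ hab]
    · intro a ha b hb hab
      rw [map_mul, hv _ ha, hv _ hb, hv _ hab]

/-- If `K` has characteristic zero and `r ∈ K̃`, then `{r}` is defined in `K` by a formula
`∃ x₁ … xₘ, T(x, x₁, …, xₘ) = 0` for some polynomial `T` with rational coefficients
(variable `0` of `Fin (m+1)` plays the role of `x`). -/
theorem stmt_12 (K : Type*) [Field K] [CharZero K] (r : K) (hr : r ∈ KTilde K) :
    ∃ (m : ℕ), 1 ≤ m ∧ ∃ T : MvPolynomial (Fin (m + 1)) ℚ,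
      {w : K | ∃ ws : Fin m → K, MvPolynomial.aeval (Fin.cons w ws) T = 0} = {r} := by
  obtain ⟨A, hA⟩ := hr
  by_cases h : ∀ p : Polynomial ℚ, Irreducible p → ∃ x : K, Polynomial.aeval x p = 0
  · obtain ⟨q, rfl⟩ := mem_range_of_roots h hA
    refine ⟨1, le_rfl, MvPolynomial.X 0 - MvPolynomial.C q, ?_⟩
    ext w
    simp [sub_eq_zero, MvPolynomial.algHom_C]
  · push Not at h
    obtain ⟨p, hp, hroot⟩ := h
    exact ⟨A.card, Finset.card_pos.mpr ⟨r, hA.1⟩,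
      exists_equation_of_no_root p hp.natDegree_pos hroot hA⟩
end

section
/- Let p be a prime with p ≠ 2. Then for every x ∈ ℚ_p, one has |x|_p ≤ 1 if and only if there exists y ∈ ℚ_p such that 1 + p·x² = y². -/
/-!
If `‖x‖ ≤ 1`, then `T² - (1 + p x²)` has integral coefficients, and `T = 1` is an approximate root:
its value there is `-p x²`, of norm `< 1`, while its derivative `2` is a unit because `p ≠ 2`.
Hensel's lemma then gives a root. If `‖x‖ > 1`, then `p x²` has odd valuation `1 + 2 v(x) < 0`, so
`1 + p x²` has the same odd valuation and is not a square.
-/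

/-- `1 + p x²` is a square for integral `x`, by Hensel's lemma at the approximate root `1`. -/
theorem exists_sq_of_padicInt (p : ℕ) [Fact p.Prime] (hp : p ≠ 2) (x : ℤ_[p]) :
    ∃ y : ℤ_[p], 1 + (p : ℤ_[p]) * x ^ 2 = y ^ 2 := by
  have h2 : ‖(2 : ℤ_[p])‖ = 1 := by
    have h : ‖((2 : ℕ) : ℤ_[p])‖ = 1 := by
      rw [PadicInt.norm_natCast_eq_one_iff]
      exact (Nat.coprime_primes Fact.out Nat.prime_two).2 hp
    simpa using h
  have hlt : ‖(p : ℤ_[p]) * x ^ 2‖ < 1 := by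
    rw [norm_mul]
    refine mul_lt_one_of_nonneg_of_lt_one_left (norm_nonneg _) ?_ (PadicInt.norm_le_one _)
    rw [PadicInt.norm_p]
    exact inv_lt_one_of_one_lt₀ (by exact_mod_cast (Fact.out : p.Prime).one_lt)
  obtain ⟨z, hz, -⟩ := hensels_lemma (p := p) (R := ℤ_[p])
    (F := Polynomial.X ^ 2 - Polynomial.C (1 + (p : ℤ_[p]) * x ^ 2)) (a := 1) (by
      rw [Polynomial.derivative_sub, Polynomial.derivative_C, Polynomial.derivative_X_pow]
      simpa [h2, -norm_mul] using hlt)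
  refine ⟨z, ?_⟩
  simp only [map_sub, map_pow, Polynomial.aeval_X, Polynomial.aeval_C, Algebra.algebraMap_self,
    RingHom.id_apply] at hz
  exact (sub_eq_zero.1 hz).symm

/-- For `p ≠ 2` prime and `x ∈ ℚ_p`: `|x|_p ≤ 1` iff `1 + p·x² ` is a square in `ℚ_p`. -/
theorem stmt_15 (p : ℕ) [Fact p.Prime] (hp : p ≠ 2) (x : ℚ_[p]) :
    ‖x‖ ≤ 1 ↔ ∃ y : ℚ_[p], 1 + (p : ℚ_[p]) * x ^ 2 = y ^ 2 := by
  constructor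
  · intro hx
    obtain ⟨y, hy⟩ := exists_sq_of_padicInt p hp ⟨x, hx⟩
    refine ⟨y, ?_⟩
    have h := congrArg (fun t : ℤ_[p] => (t : ℚ_[p])) hy
    push_cast at h
    exact h
  · rintro ⟨y, hy⟩
    by_contra hx
    have hp1 : (1 : ℝ) < p := by exact_mod_cast (Fact.out : p.Prime).one_lt
    have hp0 : (p : ℚ_[p]) ≠ 0 := by exact_mod_cast (Fact.out : p.Prime).ne_zero
    have hx0 : x ≠ 0 := by
      rintro rfl
      simp at hx
    have hv : x.valuation < 0 := by
      rw [Padic.norm_le_one_iff_val_nonneg] at hx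
      omega
    have hw : (p : ℚ_[p]) * x ^ 2 ≠ 0 := mul_ne_zero hp0 (pow_ne_zero _ hx0)
    have hval : ((p : ℚ_[p]) * x ^ 2).valuation = 1 + 2 * x.valuation := by
      rw [Padic.valuation_mul hp0 (pow_ne_zero _ hx0), Padic.valuation_p, Padic.valuation_pow]
      norm_num
    have hgt : 1 < ‖(p : ℚ_[p]) * x ^ 2‖ := by
      rw [Padic.norm_eq_zpow_neg_valuation hw, hval]
      exact one_lt_zpow₀ hp1 (by omega)
    have heq : ‖(p : ℚ_[p]) * x ^ 2‖ = ‖y ^ 2‖ := by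
      apply Padic.norm_eq_of_norm_sub_lt_left
      rw [← hy]
      simpa using hgt
    have hy0 : y ^ 2 ≠ 0 := by
      intro h
      rw [h, norm_zero] at heq
      linarith
    rw [Padic.norm_eq_zpow_neg_valuation hw, Padic.norm_eq_zpow_neg_valuation hy0, hval,
      Padic.valuation_pow] at heq
    have := zpow_right_injective₀ (by linarith) hp1.ne' heq
    push_cast at this
    omega
end

section
/- For every x ∈ ℚ₂, one has |x|₂ ≤ 1 if and only if there exists y ∈ ℚ₂ such that 1 + 2·x³ = y³. -/
/-!
If `x` is a 2-adic integer, then `Y³ - (1 + 2x³)` has the approximate root `Y = 1`: its value there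
has norm less than `1`, while its derivative `3` is a unit, so Hensel's lemma gives a cube root.
If `‖x‖ > 1`, then `v(x) ≤ -1`, so `v(2x³) = 1 + 3 v(x) < 0` and `1 + 2x³` has that same valuation.
It is not divisible by `3`, so `1 + 2x³` is not a cube.
-/

/-- For `x ∈ ℚ₂`: `|x|₂ ≤ 1` iff `1 + 2·x³` is a cube in `ℚ₂`. -/
theorem stmt_16 (x : ℚ_[2]) :
    ‖x‖ ≤ 1 ↔ ∃ y : ℚ_[2], 1 + 2 * x ^ 3 = y ^ 3 := by
  have h2 : ‖(2 : ℚ_[2])‖ = (2 : ℝ)⁻¹ := by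
    simpa using Padic.norm_p (p := 2)
  constructor
  · intro hx
    let a : ℤ_[2] := ⟨x, hx⟩
    have h3 : ‖(3 : ℤ_[2])‖ = 1 := by
      rw [PadicInt.norm_def]
      exact_mod_cast (Padic.norm_natCast_eq_one_iff (p := 2) (n := 3)).2 (by decide)
    have hval : Polynomial.aeval (1 : ℤ_[2])
        (Polynomial.X ^ 3 - Polynomial.C (1 + 2 * a ^ 3) : Polynomial ℤ_[2]) = -(2 * a ^ 3) := by
      simp
    have hder : Polynomial.aeval (1 : ℤ_[2])
        (Polynomial.X ^ 3 - Polynomial.C (1 + 2 * a ^ 3) : Polynomial ℤ_[2]).derivative = 3 := by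
      rw [Polynomial.derivative_sub, Polynomial.derivative_C, Polynomial.derivative_X_pow]
      simp
    obtain ⟨z, hz, -⟩ := hensels_lemma (p := 2) (a := (1 : ℤ_[2]))
      (F := (Polynomial.X ^ 3 - Polynomial.C (1 + 2 * a ^ 3) : Polynomial ℤ_[2])) (by
        rw [hval, hder, h3, norm_neg, norm_mul, norm_pow]
        have h2' : ‖(2 : ℤ_[2])‖ = (2 : ℝ)⁻¹ := by
          simpa using PadicInt.norm_p (p := 2)
        have : ‖a‖ ^ 3 ≤ 1 := pow_le_one₀ (norm_nonneg _) a.norm_le_one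
        rw [h2']
        linarith)
    refine ⟨z, ?_⟩
    have hz' : z ^ 3 = 1 + 2 * a ^ 3 := by
      simpa [sub_eq_zero] using hz
    have := congrArg (fun t : ℤ_[2] => (t : ℚ_[2])) hz'
    push_cast at this
    exact this.symm
  · rintro ⟨y, hy⟩
    by_contra hx
    have hx0 : x ≠ 0 := by rintro rfl; simp at hx
    rw [Padic.norm_le_one_iff_val_nonneg] at hx
    have hn : ‖2 * x ^ 3‖ = (2 : ℝ) ^ (-(1 + 3 * x.valuation)) := by
      rw [norm_mul, norm_pow, h2, Padic.norm_eq_zpow_neg_valuation hx0, ← zpow_natCast,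
        ← zpow_mul, ← zpow_neg_one, Nat.cast_ofNat, ← zpow_add₀ two_ne_zero]
      congr 1
      push_cast
      ring
    have hgt : 1 < ‖2 * x ^ 3‖ := by
      rw [hn]
      exact one_lt_zpow₀ one_lt_two (by omega)
    have hs : ‖y ^ 3‖ = ‖2 * x ^ 3‖ := by
      rw [← hy, Padic.add_eq_max_of_ne (by rw [norm_one]; exact hgt.ne), norm_one,
        max_eq_right hgt.le]
    have hy0 : y ≠ 0 := by
      rintro rfl
      rw [← hs] at hgt
      norm_num at hgt
    rw [hn, norm_pow, Padic.norm_eq_zpow_neg_valuation hy0, ← zpow_natCast, ← zpow_mul,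
      Nat.cast_ofNat] at hs
    have := zpow_right_injective₀ (two_pos : (0 : ℝ) < 2) (by norm_num) hs
    push_cast at this
    omega
end

section
/- Let r ∈ ℝ be algebraic over ℚ with r ≥ 0. Then there exists a finite adequate set for r in ℝ; that is, r ∈ ℝ̃. -/
open Filter Polynomial

/-- A family of self-maps of `ℝ`, indexed by the finite subsets of `ℝ`, which is a ring homomorphism
in the limit: each single instance of a homomorphism law holds for all large enough finite sets. -/
structure EventuallyRingHom (F : Finset ℝ → ℝ → ℝ) : Prop where
  one : ∀ᶠ A in atTop, F A 1 = 1
  add : ∀ a b : ℝ, ∀ᶠ A in atTop, F A (a + b) = F A a + F A b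
  mul : ∀ a b : ℝ, ∀ᶠ A in atTop, F A (a * b) = F A a * F A b

namespace EventuallyRingHom

variable {F : Finset ℝ → ℝ → ℝ}

theorem eventually_zero (hF : EventuallyRingHom F) : ∀ᶠ A in atTop, F A 0 = 0 := by
  filter_upwards [hF.add 0 0] with A h
  rw [add_zero] at h
  linarith

theorem eventually_intCast (hF : EventuallyRingHom F) (n : ℤ) :
    ∀ᶠ A in atTop, F A (n : ℝ) = n := by
  induction n with
  | zero => simpa using hF.eventually_zero
  | succ k ih =>
    filter_upwards [ih, hF.add k 1, hF.one] with A h1 h2 h3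
    push_cast at h1 ⊢
    rw [h2, h1, h3]
  | pred k ih =>
    filter_upwards [ih, hF.add (-(k : ℝ) - 1) 1, hF.one] with A h1 h2 h3
    push_cast at h1 ⊢
    rw [sub_add_cancel, h1, h3] at h2
    linarith

theorem eventually_aeval (hF : EventuallyRingHom F) (r : ℝ) (p : ℤ[X]) :
    ∀ᶠ A in atTop, F A (aeval r p) = aeval (F A r) p := by
  induction p using Polynomial.induction_on with
  | C n => simpa using hF.eventually_intCast n
  | add p q hp hq =>
    filter_upwards [hp, hq, hF.add (aeval r p) (aeval r q)] with A h1 h2 h3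
    rw [map_add, map_add, h3, h1, h2]
  | monomial k n ih =>
    filter_upwards [ih, hF.mul (aeval r (C n * X ^ k)) r] with A h1 h2
    rw [pow_succ, ← mul_assoc, map_mul (aeval r), map_mul (aeval (F A r)), aeval_X, aeval_X,
      h2, h1]

/-- If `p(r) ≥ 0`, then `p(r) = s * s`, so that `p(F A r)` is eventually the square of `F A s`. -/
theorem eventually_aeval_nonneg (hF : EventuallyRingHom F) (r : ℝ) (p : ℤ[X])
    (hp : 0 ≤ aeval r p) : ∀ᶠ A in atTop, 0 ≤ aeval (F A r) p := by
  filter_upwards [hF.eventually_aeval r p, hF.mul √(aeval r p) √(aeval r p)] with A h1 h2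
  rw [Real.mul_self_sqrt hp] at h2
  rw [← h1, h2]
  exact mul_self_nonneg _

theorem eventually_ratCast_le (hF : EventuallyRingHom F) (r : ℝ) (q : ℚ) (hq : (q : ℝ) ≤ r) :
    ∀ᶠ A in atTop, (q : ℝ) ≤ F A r := by
  have hd : (0 : ℝ) < q.den := by exact_mod_cast q.den_pos
  -- Clearing denominators turns the inequality into nonnegativity of a polynomial over `ℤ`.
  have key (x : ℝ) : 0 ≤ aeval x (C (q.den : ℤ) * X - C q.num : ℤ[X]) ↔ (q : ℝ) ≤ x := by
    rw [Rat.cast_def, div_le_iff₀ hd]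
    simp [mul_comm]
  filter_upwards [hF.eventually_aeval_nonneg r _ ((key r).2 hq)] with A hA
  exact (key _).1 hA

theorem eventually_le_ratCast (hF : EventuallyRingHom F) (r : ℝ) (q : ℚ) (hq : r ≤ (q : ℝ)) :
    ∀ᶠ A in atTop, F A r ≤ (q : ℝ) := by
  have hd : (0 : ℝ) < q.den := by exact_mod_cast q.den_pos
  have key (x : ℝ) : 0 ≤ aeval x (C q.num - C (q.den : ℤ) * X : ℤ[X]) ↔ x ≤ (q : ℝ) := by
    rw [Rat.cast_def, le_div_iff₀ hd]
    simp [mul_comm]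
  filter_upwards [hF.eventually_aeval_nonneg r _ ((key r).2 hq)] with A hA
  exact (key _).1 hA

theorem eventually_eq_of_isAlgebraic (hF : EventuallyRingHom F) {r : ℝ} (hr : IsAlgebraic ℤ r) :
    ∀ᶠ A in atTop, F A r = r := by
  obtain ⟨p, hp0, hp⟩ := hr
  have hfin : (p.rootSet ℝ \ {r}).Finite := (p.rootSet_finite ℝ).subset Set.sdiff_subset
  have hnhds : (p.rootSet ℝ \ {r})ᶜ ∈ nhds r :=
    hfin.isClosed.isOpen_compl.mem_nhds (by simp)
  obtain ⟨l, u, ⟨hl, hu⟩, hlu⟩ := mem_nhds_iff_exists_Ioo_subset.1 hnhds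
  obtain ⟨q₁, hq₁l, hq₁r⟩ := exists_rat_btwn hl
  obtain ⟨q₂, hq₂r, hq₂u⟩ := exists_rat_btwn hu
  filter_upwards [hF.eventually_ratCast_le r q₁ hq₁r.le, hF.eventually_le_ratCast r q₂ hq₂r.le,
    hF.eventually_aeval r p, hF.eventually_zero] with A h1 h2 h3 h4
  by_contra hne
  rw [hp, h4] at h3
  exact hlu ⟨hq₁l.trans_le h1, h2.trans_lt hq₂u⟩ ⟨(mem_rootSet_of_ne hp0).2 h3.symm, hne⟩

end EventuallyRingHom

/-- Every nonnegative real number algebraic over `ℚ` admits a finite adequate set,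
i.e. lies in `ℝ̃`. -/
theorem stmt_19 (r : ℝ) (hr : IsAlgebraic ℚ r) (hr0 : 0 ≤ r) : r ∈ KTilde ℝ := by
  by_contra hcon
  -- Nothing is asked of the map attached to `A` when `r ∉ A`: large `A` contain `r`.
  have hex (A : Finset ℝ) : ∃ f : ℝ → ℝ, r ∈ A →
      ((1 : ℝ) ∈ A → f 1 = 1) ∧
      (∀ a ∈ A, ∀ b ∈ A, a + b ∈ A → f (a + b) = f a + f b) ∧
      (∀ a ∈ A, ∀ b ∈ A, a * b ∈ A → f (a * b) = f a * f b) ∧ f r ≠ r := by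
    by_contra! h
    exact hcon ⟨A, (h id).1, fun f h1 h2 h3 => (h f).2 h1 h2 h3⟩
  choose F hF using hex
  have hmem (x : ℝ) : ∀ᶠ A : Finset ℝ in atTop, x ∈ A := by
    filter_upwards [eventually_ge_atTop {x}] with A hA
    exact Finset.singleton_subset_iff.1 hA
  have hF' : EventuallyRingHom F :=
    { one := by
        filter_upwards [hmem r, hmem 1] with A hA h1
        exact (hF A hA).1 h1
      add := fun a b => by
        filter_upwards [hmem r, hmem a, hmem b, hmem (a + b)] with A hA ha hb hab
        exact (hF A hA).2.1 a ha b hb hab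
      mul := fun a b => by
        filter_upwards [hmem r, hmem a, hmem b, hmem (a * b)] with A hA ha hb hab
        exact (hF A hA).2.2.1 a ha b hb hab }
  have hrZ : IsAlgebraic ℤ r := (IsFractionRing.isAlgebraic_iff ℤ ℚ ℝ).2 hr
  obtain ⟨A, hA, hAr⟩ := ((hmem r).and (hF'.eventually_eq_of_isAlgebraic hrZ)).exists
  exact (hF A hA).2.2.2 hAr
end
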